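/- For all nonnegative integers i, j, k with i + j + k ≥ 1 there exist constants C(i,j,k) > 0 and ε(i,j,k) ∈ (0,1) such that: for all λ_A, λ_B > 1 and all θ ∈ (0, π/2) with (π/2 − θ)⁻¹ ≤ ε(i,j,k)·λ_A², the function φ(λ_A, λ_B, θ) = −(1/2)(π/2 − arctan(a·cot θ + b·tan θ)) satisfies |∂^{i+j+k} φ / (∂θ^i ∂λ_A^j ∂λ_B^k)| ≤ C(i,j,k)·(π/2 − θ)^{−i−1}·λ_A^{−2−j}·λ_B^{−k}. -/

import Mathlib

open Real

/-- a = (λ_A²λ_B² − λ_A⁻²λ_B⁻²)/(2(λ_B² − λ_B⁻²)). -/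
noncomputable def aCoef (lA lB : ℝ) : ℝ :=
  (lA ^ 2 * lB ^ 2 - lA⁻¹ ^ 2 * lB⁻¹ ^ 2) / (2 * (lB ^ 2 - lB⁻¹ ^ 2))

/-- b = (λ_A²λ_B⁻² − λ_A⁻²λ_B²)/(2(λ_B² − λ_B⁻²)). -/
noncomputable def bCoef (lA lB : ℝ) : ℝ :=
  (lA ^ 2 * lB⁻¹ ^ 2 - lA⁻¹ ^ 2 * lB ^ 2) / (2 * (lB ^ 2 - lB⁻¹ ^ 2))

/-- φ(λ_A, λ_B, θ) = −(1/2)(π/2 − arctan(a·cot θ + b·tan θ)) on θ ∈ (0, π/2). -/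
noncomputable def phiS (lA lB θ : ℝ) : ℝ :=
  -(1 / 2) * (π / 2 - Real.arctan (aCoef lA lB * Real.cot θ + bCoef lA lB * Real.tan θ))

namespace PhiAux

abbrev P := ℝ × ℝ × ℝ

noncomputable def gτ (p : P) : ℝ := π / 2 - p.2.2
noncomputable def gc (p : P) : ℝ := Real.cos (2 * p.2.2)
noncomputable def gσ (p : P) : ℝ := Real.sin (2 * p.2.2) / gτ p
noncomputable def gt (p : P) : ℝ := 2 / (p.2.1 ^ 4 + 1)
noncomputable def gμ (p : P) : ℝ := (p.1 ^ 2 * gτ p)⁻¹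
noncomputable def gE (p : P) : ℝ :=
  1 - (gμ p * gτ p) ^ 2 + (1 - gt p) * (1 + (gμ p * gτ p) ^ 2) * gc p
noncomputable def ge (p : P) : ℝ := gτ p ^ 2 / gE p
noncomputable def gf (p : P) : ℝ := gt p / gE p
noncomputable def gZ (p : P) : ℝ := 2 * (1 - gt p) * (gσ p * ge p)
noncomputable def gY (p : P) : ℝ := gμ p * gZ p
noncomputable def gh (p : P) : ℝ := (1 + gY p ^ 2)⁻¹
noncomputable def gΦ (p : P) : ℝ := Real.arctan (gY p) / gμ p

def U : Set P := {p | 1 < p.1 ∧ 1 < p.2.1 ∧ 0 < p.2.2 ∧ p.2.2 < π / 2 ∧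
  1 < 1 / 4 * p.1 ^ 2 * (π / 2 - p.2.2)}

lemma U_open : IsOpen U := by
  unfold U
  simp only [Set.ofPred_and]
  refine (isOpen_lt (by fun_prop) (by fun_prop)).inter ?_
  refine (isOpen_lt (by fun_prop) (by fun_prop)).inter ?_
  refine (isOpen_lt (by fun_prop) (by fun_prop)).inter ?_
  refine (isOpen_lt (by fun_prop) (by fun_prop)).inter ?_
  exact (isOpen_lt (by fun_prop) (by fun_prop))

/-- Functions polynomial in the generators. -/
inductive Good : (P → ℝ) → Prop
  | const (c : ℝ) : Good (fun _ => c)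
  | add {f g : P → ℝ} : Good f → Good g → Good (fun p => f p + g p)
  | mul {f g : P → ℝ} : Good f → Good g → Good (fun p => f p * g p)
  | τ : Good gτ
  | c : Good gc
  | σ : Good gσ
  | t : Good gt
  | μ : Good gμ
  | e : Good ge
  | f : Good gf
  | h : Good gh
  | Φ : Good gΦ

lemma Good.sub {f g : P → ℝ} (hf : Good f) (hg : Good g) : Good (fun p => f p - g p) := by
  have := hf.add ((Good.const (-1)).mul hg)
  convert this using 2
  ring

lemma Good.neg {f : P → ℝ} (hf : Good f) : Good (fun p => - f p) := by
  have := ((Good.const (-1)).mul hf)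
  convert this using 2
  ring

lemma Good.pow {f : P → ℝ} (hf : Good f) (n : ℕ) : Good (fun p => f p ^ n) := by
  induction n with
  | zero => simpa using Good.const 1
  | succ n ih => simpa [pow_succ] using ih.mul hf

lemma Good.E : Good gE := by
  unfold gE
  exact ((Good.const 1).sub ((Good.μ.mul Good.τ).pow 2)).add
    ((((Good.const 1).sub Good.t).mul ((Good.const 1).add ((Good.μ.mul Good.τ).pow 2))).mul Good.c)

lemma Good.Z : Good gZ := by
  unfold gZ
  exact ((Good.const 2).mul ((Good.const 1).sub Good.t)).mul (Good.σ.mul Good.e)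

lemma Good.Y : Good gY := by
  unfold gY
  exact Good.μ.mul Good.Z

/-! Bounds -/

lemma τ_pos {p : P} (hp : p ∈ U) : 0 < gτ p := by
  unfold gτ; linarith [hp.2.2.2.1]

lemma τ_lt {p : P} (hp : p ∈ U) : gτ p < 1.58 := by
  unfold gτ; linarith [hp.2.2.1, Real.pi_lt_d2]

lemma μ_pos {p : P} (hp : p ∈ U) : 0 < gμ p := by
  have := τ_pos hp
  have h1 : 0 < p.1 := by linarith [hp.1]
  unfold gμ; positivity

lemma μ_lt {p : P} (hp : p ∈ U) : gμ p < 1 / 4 := by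
  have := τ_pos hp
  have h1 : 0 < p.1 := by linarith [hp.1]
  have h2 := hp.2.2.2.2
  unfold gμ
  rw [inv_lt_comm₀ (by positivity) (by norm_num)]
  unfold gτ
  linarith

lemma t_pos {p : P} (hp : p ∈ U) : 0 < gt p := by
  unfold gt; positivity

lemma t_lt {p : P} (hp : p ∈ U) : gt p < 1 := by
  have := hp.2.1
  unfold gt
  rw [div_lt_one (by positivity)]
  have := one_lt_pow₀ this (n := 4) (by norm_num)
  linarith

lemma E_lower {p : P} (hp : p ∈ U) : (1 / 5) * gτ p ^ 2 ≤ gE p ∧ (1 / 2) * gt p ≤ gE p := by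
  have hτ := τ_pos hp
  have hτ2 := τ_lt hp
  have hμ := μ_pos hp
  have hμ2 := μ_lt hp
  have ht := t_pos hp
  have ht2 := t_lt hp
  have hs : 2 / π * gτ p ≤ Real.sin (gτ p) :=
    Real.mul_le_sin hτ.le (by unfold gτ; linarith [hp.2.2.1])
  have hπ : (0.63 : ℝ) ≤ 2 / π := by
    rw [le_div_iff₀ Real.pi_pos]
    nlinarith [Real.pi_lt_d2]
  have hs' : 0.63 * gτ p ≤ Real.sin (gτ p) := by nlinarith
  have hs2 : 0.39 * gτ p ^ 2 ≤ Real.sin (gτ p) ^ 2 := by nlinarith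
  have hc : gc p = 2 * Real.sin (gτ p) ^ 2 - 1 := by
    unfold gc gτ
    rw [Real.sin_pi_div_two_sub, Real.cos_two_mul]
  have hq : (gμ p * gτ p) ^ 2 ≤ 1 / 16 * gτ p ^ 2 := by
    rw [mul_pow]
    have : gμ p ^ 2 ≤ 1 / 16 := by nlinarith
    exact mul_le_mul_of_nonneg_right this (sq_nonneg _)
  have hq0 : 0 ≤ (gμ p * gτ p) ^ 2 := by positivity
  have hτsq : gτ p ^ 2 ≤ 2.5 := by nlinarith
  have hE : gE p = (1 - gt p) * (2 * Real.sin (gτ p) ^ 2 - 2 * (gμ p * gτ p) ^ 2 * (1 - Real.sin (gτ p) ^ 2))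
      + gt p * (1 - (gμ p * gτ p) ^ 2) := by
    unfold gE; rw [hc]; ring
  set q := (gμ p * gτ p) ^ 2
  set S := Real.sin (gτ p) ^ 2
  have hS : 0 ≤ S := sq_nonneg _
  have h1 : (1 / 5) * gτ p ^ 2 ≤ 2 * S - 2 * q * (1 - S) := by nlinarith [mul_nonneg hq0 hS]
  have h2 : 1 / 2 ≤ 1 - q := by linarith
  have h3 : 0 ≤ 2 * S - 2 * q * (1 - S) := le_trans (by positivity) h1
  rw [hE]
  constructor
  · nlinarith
  · nlinarith

lemma E_pos {p : P} (hp : p ∈ U) : 0 < gE p := by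
  have := (E_lower hp).1
  have h := τ_pos hp
  have : 0 < (1 / 5) * gτ p ^ 2 := by positivity
  linarith

lemma good_bdd_aux {f g : P → ℝ} (hf : ∃ C, ∀ p ∈ U, |f p| ≤ C) (hg : ∃ C, ∀ p ∈ U, |g p| ≤ C) :
    ∃ C, ∀ p ∈ U, |f p * g p| ≤ C := by
  obtain ⟨C, hC⟩ := hf
  obtain ⟨D, hD⟩ := hg
  refine ⟨C * D, fun p hp => ?_⟩
  rw [abs_mul]
  exact mul_le_mul (hC p hp) (hD p hp) (abs_nonneg _) ((abs_nonneg _).trans (hC p hp))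

lemma t_bdd : ∃ C, ∀ p ∈ U, |1 - gt p| ≤ C :=
  ⟨1, fun p hp => by rw [abs_le]; constructor <;> linarith [t_pos hp, t_lt hp]⟩

lemma σ_bdd : ∃ C, ∀ p ∈ U, |gσ p| ≤ C := by
  refine ⟨2, fun p hp => ?_⟩
  have hτ := τ_pos hp
  unfold gσ
  rw [abs_div, abs_of_pos hτ, div_le_iff₀ hτ]
  have : Real.sin (2 * p.2.2) = Real.sin (2 * gτ p) := by
    unfold gτ
    rw [← Real.sin_pi_sub]; congr 1; ring
  rw [this]
  have := Real.abs_sin_le_abs (x := 2 * gτ p)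
  rwa [abs_of_pos (by positivity : 0 < 2 * gτ p)] at this

lemma e_bdd : ∃ C, ∀ p ∈ U, |ge p| ≤ C := by
  refine ⟨5, fun p hp => ?_⟩
  unfold ge
  have hE := E_pos hp
  rw [abs_div, abs_of_pos hE, abs_of_nonneg (sq_nonneg _), div_le_iff₀ hE]
  linarith [(E_lower hp).1]

lemma abs_arctan_le (x : ℝ) : |Real.arctan x| ≤ |x| := by
  have key : ∀ y : ℝ, 0 ≤ y → Real.arctan y ≤ y := fun y hy => by
    by_cases h : y < π / 2
    · have := Real.le_tan hy h
      calc Real.arctan y ≤ Real.arctan (Real.tan y) := Real.arctan_strictMono.monotone this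
        _ = y := Real.arctan_tan (by linarith [Real.pi_pos]) h
    · linarith [Real.arctan_lt_pi_div_two y]
  rcases le_total 0 x with h | h
  · rw [abs_of_nonneg h, abs_of_nonneg (Real.arctan_nonneg.2 h)]
    exact key x h
  · have := key (-x) (by linarith)
    rw [Real.arctan_neg] at this
    rw [abs_of_nonpos h, abs_of_nonpos (by linarith [Real.arctan_nonneg.2 (neg_nonneg.2 h), Real.arctan_neg x] : Real.arctan x ≤ 0)]
    exact this

lemma Good.bdd {f : P → ℝ} (hf : Good f) : ∃ C, ∀ p ∈ U, |f p| ≤ C := by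
  induction hf with
  | const c => exact ⟨|c|, fun p _ => le_rfl⟩
  | add _ _ h1 h2 =>
    obtain ⟨C, hC⟩ := h1
    obtain ⟨D, hD⟩ := h2
    exact ⟨C + D, fun p hp => (abs_add_le _ _).trans (add_le_add (hC p hp) (hD p hp))⟩
  | mul _ _ h1 h2 => exact good_bdd_aux h1 h2
  | τ => exact ⟨1.58, fun p hp => by rw [abs_of_pos (τ_pos hp)]; exact (τ_lt hp).le⟩
  | c => exact ⟨1, fun p _ => Real.abs_cos_le_one _⟩
  | σ => exact σ_bdd
  | t => exact ⟨1, fun p hp => by rw [abs_of_pos (t_pos hp)]; exact (t_lt hp).le⟩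
  | μ => exact ⟨1 / 4, fun p hp => by rw [abs_of_pos (μ_pos hp)]; exact (μ_lt hp).le⟩
  | e => exact e_bdd
  | f =>
    refine ⟨2, fun p hp => ?_⟩
    unfold gf
    have hE := E_pos hp
    rw [abs_div, abs_of_pos hE, abs_of_pos (t_pos hp), div_le_iff₀ hE]
    linarith [(E_lower hp).2]
  | h =>
    refine ⟨1, fun p hp => ?_⟩
    unfold gh
    rw [abs_of_pos (by positivity)]
    exact inv_le_one_of_one_le₀ (by linarith [sq_nonneg (gY p)])
  | Φ =>
    have : ∃ C, ∀ p ∈ U, |gZ p| ≤ C :=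
      good_bdd_aux (good_bdd_aux ⟨2, fun p _ => by simp⟩ t_bdd) (good_bdd_aux σ_bdd e_bdd)
    obtain ⟨C, hC⟩ := this
    refine ⟨C, fun p hp => ?_⟩
    unfold gΦ
    have hμ := μ_pos hp
    rw [abs_div, abs_of_pos hμ, div_le_iff₀ hμ]
    refine (abs_arctan_le _).trans ?_
    unfold gY
    rw [abs_mul, abs_of_pos hμ, mul_comm]
    exact mul_le_mul_of_nonneg_right (hC p hp) hμ.le

lemma phi_eq {p : P} (hp : p ∈ U) :
    phiS p.1 p.2.1 p.2.2 = gμ p * (-(1 / 2) * gΦ p) := by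
  have hμ := μ_pos hp
  have hE := E_pos hp
  have hτ := τ_pos hp
  have hX : aCoef p.1 p.2.1 * Real.cot p.2.2 + bCoef p.1 p.2.1 * Real.tan p.2.2 = (gY p)⁻¹ := by
    have hA : 0 < p.1 := by linarith [hp.1]
    have hB : 0 < p.2.1 := by linarith [hp.2.1]
    have hB4 := one_lt_pow₀ hp.2.1 (n := 4) (by norm_num)
    have hs : 0 < Real.sin p.2.2 := Real.sin_pos_of_pos_of_lt_pi hp.2.2.1 (by linarith [hp.2.2.2.1, Real.pi_pos])
    have hc : 0 < Real.cos p.2.2 := Real.cos_pos_of_mem_Ioo ⟨by linarith [hp.2.2.1, Real.pi_pos], hp.2.2.2.1⟩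
    have hYe : gY p = 2 * (1 - gt p) * Real.sin (2 * p.2.2) / (p.1 ^ 2 * gE p) := by
      unfold gY gZ gσ ge gμ
      field_simp
    have hEe : gE p = 1 - (p.1 ^ 4)⁻¹ + (1 - gt p) * (1 + (p.1 ^ 4)⁻¹) * gc p := by
      have : (gμ p * gτ p) ^ 2 = (p.1 ^ 4)⁻¹ := by
        unfold gμ; field_simp
      unfold gE; rw [this]
    rw [hYe, inv_div, hEe]
    unfold gt gc aCoef bCoef
    rw [Real.cot_eq_cos_div_sin, Real.tan_eq_sin_div_cos, Real.sin_two_mul, Real.cos_two_mul]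
    have h4 : p.2.1 ^ 4 - 1 ≠ 0 := by linarith
    have e1 : p.2.1 ^ 2 - p.2.1⁻¹ ^ 2 = (p.2.1 ^ 4 - 1) / p.2.1 ^ 2 := by field_simp
    have e2 : 1 - 2 / (p.2.1 ^ 4 + 1) = (p.2.1 ^ 4 - 1) / (p.2.1 ^ 4 + 1) := by field_simp; ring
    rw [e1, e2]
    have hsc : Real.sin p.2.2 ^ 2 = 1 - Real.cos p.2.2 ^ 2 := Real.sin_sq _
    field_simp
    rw [hsc]
    ring
  have hYpos : 0 < gY p := by
    have hs : 0 < Real.sin (2 * p.2.2) := Real.sin_pos_of_pos_of_lt_pi (by linarith [hp.2.2.1]) (by linarith [hp.2.2.2.1])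
    have ht : 0 < 1 - gt p := by linarith [t_lt hp]
    unfold gY gZ gσ ge
    positivity
  unfold phiS gΦ
  rw [hX, Real.arctan_inv_of_pos hYpos]
  field_simp
  ring

/-- A coordinate direction with a scaling weight. -/
structure Dir where
  L : P → ℝ → P
  co : P → ℝ
  sc : P → ℝ
  hL : ∀ p, L p (co p) = p
  cont : ∀ p, Continuous (L p)

/-- `g` is the scaled derivative of `f` in the direction `d` on `U`. -/
def R (d : Dir) (f g : P → ℝ) : Prop :=
  ∀ p ∈ U, HasDerivAt (fun x => f (d.L p x)) (g p / d.sc p) (d.co p)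

namespace R
variable {d : Dir} {f g f' g' : P → ℝ}

lemma congr (h : R d f f') (h' : ∀ p ∈ U, f' p = g' p) : R d f g' := fun p hp => by
  rw [← h' p hp]; exact h p hp

lemma const (d : Dir) (c : ℝ) : R d (fun _ => c) (fun _ => 0) := fun p _ => by
  simpa using hasDerivAt_const (d.co p) c

lemma add (hf : R d f f') (hg : R d g g') :
    R d (fun p => f p + g p) (fun p => f' p + g' p) := fun p hp => by
  have := (hf p hp).add (hg p hp)
  rw [← add_div] at this
  exact this

lemma sub (hf : R d f f') (hg : R d g g') :
    R d (fun p => f p - g p) (fun p => f' p - g' p) := fun p hp => by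
  have := (hf p hp).sub (hg p hp)
  rw [← sub_div] at this
  exact this

lemma mul (hf : R d f f') (hg : R d g g') :
    R d (fun p => f p * g p) (fun p => f' p * g p + f p * g' p) := fun p hp => by
  have := (hf p hp).mul (hg p hp)
  rw [d.hL] at this
  refine HasDerivAt.congr_deriv this ?_
  ring

lemma sq (hf : R d f f') : R d (fun p => f p ^ 2) (fun p => 2 * f p * f' p) := by
  have := hf.mul hf
  simp only [← pow_two] at this
  exact this.congr fun p _ => by ring

lemma inv (hf : R d f f') (h0 : ∀ p ∈ U, f p ≠ 0) :
    R d (fun p => (f p)⁻¹) (fun p => - f' p / f p ^ 2) := fun p hp => by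
  have := (hf p hp).inv (by rw [d.hL]; exact h0 p hp)
  rw [d.hL] at this
  refine HasDerivAt.congr_deriv this ?_
  ring

lemma arctan (hf : R d f f') :
    R d (fun p => Real.arctan (f p)) (fun p => f' p * (1 + f p ^ 2)⁻¹) := fun p hp => by
  have := (hf p hp).arctan
  rw [d.hL] at this
  refine HasDerivAt.congr_deriv this ?_
  ring

end R

/-- Data showing that a direction preserves the generators. -/
structure Data (d : Dir) where
  a : ℝ
  b : ℝ
  T : P → ℝ
  G : P → ℝ
  c' : P → ℝ
  σ' : P → ℝ
  gT : Good T
  gG : Good G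
  gc' : Good c'
  gσ' : Good σ'
  rτ : R d gτ (fun p => a * gτ p)
  rμ : R d gμ (fun p => b * gμ p)
  rt : R d gt (fun p => gt p * T p)
  rc : R d gc c'
  rσ : R d gσ σ'
  hG : ∀ p ∈ U, -(2 * (a + b) * (gμ p * gτ p) ^ 2)
    + (-(gt p * T p) * (1 + (gμ p * gτ p) ^ 2) * gc p
      + (1 - gt p) * (2 * (a + b) * (gμ p * gτ p) ^ 2) * gc p
      + (1 - gt p) * (1 + (gμ p * gτ p) ^ 2) * c' p) = gE p * G p

namespace Data
variable {d : Dir} (D : Data d)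
include D

lemma rE : R d gE (fun p => gE p * D.G p) := by
  have hq := (D.rμ.mul D.rτ).sq
  have := ((R.const d 1).sub hq).add
    ((((R.const d 1).sub D.rt).mul ((R.const d 1).add hq)).mul D.rc)
  refine R.congr this fun p hp => ?_
  rw [← D.hG p hp]
  ring

lemma re : R d ge (fun p => ge p * (2 * D.a - D.G p)) := by
  have := D.rτ.sq.mul (D.rE.inv (fun p hp => (E_pos hp).ne'))
  refine R.congr this fun p hp => ?_
  have := (E_pos hp).ne'
  unfold ge
  field_simp
  ring

lemma rf : R d gf (fun p => gf p * (D.T p - D.G p)) := by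
  have := D.rt.mul (D.rE.inv (fun p hp => (E_pos hp).ne'))
  refine R.congr this fun p hp => ?_
  have := (E_pos hp).ne'
  unfold gf
  field_simp
  ring

lemma rZ : ∃ Z', Good Z' ∧ R d gZ Z' := by
  refine ⟨_, ?_, ((R.const d 2).mul ((R.const d 1).sub D.rt)).mul (D.rσ.mul D.re)⟩
  have ge' : Good (fun p => ge p * (2 * D.a - D.G p)) := Good.e.mul ((Good.const _).sub D.gG)
  have h1 := ((Good.const 2).mul ((Good.const 1).sub Good.t)).mul
    ((D.gσ'.mul Good.e).add (Good.σ.mul ge'))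
  have h2 := (((Good.const 0).mul ((Good.const 1).sub Good.t)).add
    ((Good.const 2).mul ((Good.const 0).sub (Good.t.mul D.gT)))).mul (Good.σ.mul Good.e)
  exact h2.add h1

lemma good {f : P → ℝ} (hf : Good f) : ∃ g, Good g ∧ R d f g := by
  obtain ⟨Z', gZ', rZ'⟩ := D.rZ
  have rY : R d gY (fun p => D.b * gμ p * gZ p + gμ p * Z' p) := D.rμ.mul rZ'
  have gY' : Good (fun p => D.b * gμ p * gZ p + gμ p * Z' p) :=
    (((Good.const _).mul Good.μ).mul Good.Z).add (Good.μ.mul gZ')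
  induction hf with
  | const c => exact ⟨_, Good.const 0, R.const d c⟩
  | add _ _ h1 h2 =>
    obtain ⟨f', hf', rf'⟩ := h1
    obtain ⟨g', hg', rg'⟩ := h2
    exact ⟨_, hf'.add hg', rf'.add rg'⟩
  | mul hf hg h1 h2 =>
    obtain ⟨f', hf', rf'⟩ := h1
    obtain ⟨g', hg', rg'⟩ := h2
    exact ⟨_, (hf'.mul hg).add (hf.mul hg'), rf'.mul rg'⟩
  | τ => exact ⟨_, (Good.const _).mul Good.τ, D.rτ⟩
  | c => exact ⟨_, D.gc', D.rc⟩
  | σ => exact ⟨_, D.gσ', D.rσ⟩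
  | t => exact ⟨_, Good.t.mul D.gT, D.rt⟩
  | μ => exact ⟨_, (Good.const _).mul Good.μ, D.rμ⟩
  | e => exact ⟨_, Good.e.mul ((Good.const _).sub D.gG), D.re⟩
  | f => exact ⟨_, Good.f.mul (D.gT.sub D.gG), D.rf⟩
  | h =>
    have := ((R.const d 1).add rY.sq).inv (fun p _ => by positivity)
    refine ⟨_, ?_, R.congr (g' := fun p => (-2) * gY p * (D.b * gμ p * gZ p + gμ p * Z' p) * gh p ^ 2)
      this fun p hp => ?_⟩
    · exact (((Good.const _).mul Good.Y).mul gY').mul (Good.h.pow 2)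
    · unfold gh
      have : (1 + gY p ^ 2) ≠ 0 := by positivity
      field_simp
      ring
  | Φ =>
    have := rY.arctan.mul (D.rμ.inv (fun p hp => (μ_pos hp).ne'))
    refine ⟨_, ?_, R.congr (g' := fun p => -D.b * gΦ p + (D.b * gZ p + Z' p) * gh p)
      this fun p hp => ?_⟩
    · exact ((Good.const _).mul Good.Φ).add ((((Good.const _).mul Good.Z).add gZ').mul Good.h)
    · have := (μ_pos hp).ne'
      have : (1 + gY p ^ 2) ≠ 0 := by positivity
      unfold gh gΦ
      field_simp
      ring

end Data

noncomputable def dA : Dir where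
  L p x := (x, p.2)
  co p := p.1
  sc p := p.1
  hL _ := rfl
  cont _ := by fun_prop

noncomputable def dB : Dir where
  L p x := (p.1, x, p.2.2)
  co p := p.2.1
  sc p := p.2.1
  hL _ := rfl
  cont _ := by fun_prop

noncomputable def dθ : Dir where
  L p x := (p.1, p.2.1, x)
  co p := p.2.2
  sc p := gτ p
  hL _ := rfl
  cont _ := by fun_prop

lemma A_pos {p : P} (hp : p ∈ U) : 0 < p.1 := by linarith [hp.1]
lemma B_pos {p : P} (hp : p ∈ U) : 0 < p.2.1 := by linarith [hp.2.1]

/-- a function not depending on the direction -/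
lemma R_const {d : Dir} {f : P → ℝ} (h : ∀ p x, f (d.L p x) = f p) : R d f (fun _ => 0) :=
  fun p _ => by
    simp only [h, zero_div]
    exact hasDerivAt_const _ _

noncomputable def DA : Data dA where
  a := 0
  b := -2
  T _ := 0
  G p := 4 * gμ p ^ 2 * ge p * (1 - (1 - gt p) * gc p)
  c' _ := 0
  σ' _ := 0
  gT := Good.const 0
  gG := (((Good.const 4).mul (Good.μ.pow 2)).mul Good.e).mul
    ((Good.const 1).sub (((Good.const 1).sub Good.t).mul Good.c))
  gc' := Good.const 0
  gσ' := Good.const 0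
  rτ := (R_const fun _ _ => rfl).congr fun p _ => by ring
  rμ := fun p hp => by
    have hA := (A_pos hp).ne'
    have hτ := (τ_pos hp).ne'
    have := ((((hasDerivAt_id p.1).pow 2).mul_const (gτ p)).inv (by simp [hA, hτ]))
    refine HasDerivAt.congr_deriv this ?_
    simp only [dA, dB, dθ]
    unfold gμ
    simp
    field_simp
  rt := (R_const fun _ _ => rfl).congr fun p _ => by ring
  rc := R_const fun _ _ => rfl
  rσ := R_const fun _ _ => rfl
  hG p hp := by
    have := (E_pos hp).ne'
    unfold ge
    field_simp
    ring

noncomputable def DB : Data dB where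
  a := 0
  b := 0
  T p := -4 * (1 - 1 / 2 * gt p)
  G p := 4 * (1 - 1 / 2 * gt p) * gf p * (1 + (gμ p * gτ p) ^ 2) * gc p
  c' _ := 0
  σ' _ := 0
  gT := (Good.const _).mul ((Good.const 1).sub ((Good.const _).mul Good.t))
  gG := ((((Good.const _).mul ((Good.const 1).sub ((Good.const _).mul Good.t))).mul Good.f).mul
    ((Good.const 1).add ((Good.μ.mul Good.τ).pow 2))).mul Good.c
  gc' := Good.const 0
  gσ' := Good.const 0
  rτ := (R_const fun _ _ => rfl).congr fun p _ => by ring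
  rμ := (R_const fun _ _ => rfl).congr fun p _ => by ring
  rt := fun p hp => by
    have hB := (B_pos hp).ne'
    have h4 : p.2.1 ^ 4 + 1 ≠ 0 := by positivity
    have := ((((hasDerivAt_id p.2.1).pow 4).add_const 1).inv (by simpa using h4)).const_mul 2
    refine HasDerivAt.congr_deriv this ?_
    simp only [dA, dB, dθ]
    unfold gt
    simp
    field_simp
    ring
  rc := R_const fun _ _ => rfl
  rσ := R_const fun _ _ => rfl
  hG p hp := by
    have := (E_pos hp).ne'
    unfold gf
    field_simp
    ring

lemma hasDeriv_τ (x : ℝ) : HasDerivAt (fun x : ℝ => π / 2 - x) (-1) x := by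
  simpa using (hasDerivAt_id x).const_sub (π / 2)

noncomputable def Dθ : Data dθ where
  a := -1
  b := 1
  T _ := 0
  G p := -2 * (1 - gt p) * (1 + (gμ p * gτ p) ^ 2) * gσ p * ge p
  c' p := -2 * gσ p * gτ p ^ 2
  σ' p := 2 * gc p + gσ p
  gT := Good.const 0
  gG := ((((Good.const _).mul ((Good.const 1).sub Good.t)).mul
    ((Good.const 1).add ((Good.μ.mul Good.τ).pow 2))).mul Good.σ).mul Good.e
  gc' := ((Good.const _).mul Good.σ).mul (Good.τ.pow 2)
  gσ' := ((Good.const _).mul Good.c).add Good.σ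
  rτ := fun p hp => by
    have hτ := (τ_pos hp).ne'
    have := hasDeriv_τ p.2.2
    refine HasDerivAt.congr_deriv this ?_
    simp only [dA, dB, dθ]
    field_simp
  rμ := fun p hp => by
    have hA := (A_pos hp).ne'
    have hτ := (τ_pos hp).ne'
    have := ((hasDeriv_τ p.2.2).const_mul (p.1 ^ 2)).inv (mul_ne_zero (pow_ne_zero 2 hA) hτ)
    refine HasDerivAt.congr_deriv this ?_
    simp only [dA, dB, dθ]
    change -(p.1 ^ 2 * -1) / (p.1 ^ 2 * gτ p) ^ 2 = _
    unfold gμ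
    field_simp
  rt := (R_const fun _ _ => rfl).congr fun p _ => by ring
  rc := fun p hp => by
    have hτ := (τ_pos hp).ne'
    have := ((hasDerivAt_id p.2.2).const_mul 2).cos
    refine HasDerivAt.congr_deriv this ?_
    simp only [dA, dB, dθ]
    simp only [id_eq]
    unfold gσ
    field_simp
  rσ := fun p hp => by
    have hτ := (τ_pos hp).ne'
    have := (((hasDerivAt_id p.2.2).const_mul 2).sin).div (hasDeriv_τ p.2.2) hτ
    refine HasDerivAt.congr_deriv this ?_
    simp only [dA, dB, dθ]
    simp only [id_eq]
    change (Real.cos (2 * p.2.2) * (2 * 1) * gτ p - Real.sin (2 * p.2.2) * -1) / gτ p ^ 2 = _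
    unfold gσ gc
    field_simp
    ring
  hG p hp := by
    have := (E_pos hp).ne'
    unfold ge
    field_simp
    ring

/-- the weight -/
noncomputable def W (i j k : ℕ) (p : P) : ℝ :=
  (π / 2 - p.2.2) ^ (-(i : ℤ) - 1) * p.1 ^ (-2 - (j : ℤ)) * p.2.1 ^ (-(k : ℤ))

def Rep (f : P → ℝ) (i j k : ℕ) : Prop := ∃ g, Good g ∧ ∀ p ∈ U, f p = W i j k p * g p

lemma Rep.step {d : Dir} (D : Data d) {f : P → ℝ} {i j k i' j' k' : ℕ} (hf : Rep f i j k)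
    (m : ℝ) (hW : R d (W i j k) (fun p => m * W i j k p))
    (hW' : ∀ p ∈ U, W i j k p / d.sc p = W i' j' k' p) :
    Rep (fun p => deriv (fun x => f (d.L p x)) (d.co p)) i' j' k' := by
  obtain ⟨g, gg, hg⟩ := hf
  obtain ⟨g', gg', rg⟩ := D.good gg
  refine ⟨fun p => m * g p + g' p, ((Good.const m).mul gg).add gg', fun p hp => ?_⟩
  have h1 := hW.mul rg p hp
  have hev : (fun x => f (d.L p x)) =ᶠ[nhds (d.co p)]
      (fun x => W i j k (d.L p x) * g (d.L p x)) := by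
    have : ∀ᶠ x in nhds (d.co p), d.L p x ∈ U :=
      (d.cont p).continuousAt.eventually_mem (by rw [d.hL]; exact U_open.mem_nhds hp)
    filter_upwards [this] with x hx using hg _ hx
  beta_reduce
  rw [hev.deriv_eq, h1.deriv, ← hW' p hp]
  ring

lemma Rep.stepB {f : P → ℝ} {i j k : ℕ} (hf : Rep f i j k) :
    Rep (fun p => deriv (fun x => f (p.1, x, p.2.2)) p.2.1) i j (k + 1) := by
  refine Rep.step DB hf (-(k : ℝ)) (fun p hp => ?_) (fun p hp => ?_)
  · have hB := (B_pos hp).ne'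
    have := (hasDerivAt_zpow (-(k : ℤ)) p.2.1 (Or.inl hB)).const_mul
      ((π / 2 - p.2.2) ^ (-(i : ℤ) - 1) * p.1 ^ (-2 - (j : ℤ)))
    refine HasDerivAt.congr_deriv this ?_
    simp only [dA, dB, dθ]
    unfold W
    rw [zpow_sub_one₀ hB]
    push_cast
    ring
  · have hB := (B_pos hp).ne'
    simp only [dB, W]
    rw [show (-((k + 1 : ℕ) : ℤ)) = -(k : ℤ) - 1 by push_cast; ring, zpow_sub_one₀ hB]
    ring

lemma Rep.stepA {f : P → ℝ} {i j k : ℕ} (hf : Rep f i j k) :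
    Rep (fun p => deriv (fun x => f (x, p.2)) p.1) i (j + 1) k := by
  refine Rep.step DA hf (-2 - (j : ℝ)) (fun p hp => ?_) (fun p hp => ?_)
  · have hB := (A_pos hp).ne'
    have := ((hasDerivAt_zpow (-2 - (j : ℤ)) p.1 (Or.inl hB)).const_mul
      ((π / 2 - p.2.2) ^ (-(i : ℤ) - 1))).mul_const (p.2.1 ^ (-(k : ℤ)))
    refine HasDerivAt.congr_deriv this ?_
    simp only [dA, dB, dθ]
    unfold W
    rw [zpow_sub_one₀ hB]
    push_cast
    ring
  · have hB := (A_pos hp).ne'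
    simp only [dA, W]
    rw [show (-2 - ((j + 1 : ℕ) : ℤ)) = -2 - (j : ℤ) - 1 by push_cast; ring, zpow_sub_one₀ hB]
    ring

lemma Rep.stepθ {f : P → ℝ} {i j k : ℕ} (hf : Rep f i j k) :
    Rep (fun p => deriv (fun x => f (p.1, p.2.1, x)) p.2.2) (i + 1) j k := by
  refine Rep.step Dθ hf ((i : ℝ) + 1) (fun p hp => ?_) (fun p hp => ?_)
  · have hτ : π / 2 - p.2.2 ≠ 0 := (τ_pos hp).ne'
    have := (((hasDerivAt_zpow (-(i : ℤ) - 1) (π / 2 - p.2.2) (Or.inl hτ)).comp p.2.2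
      (hasDeriv_τ p.2.2)).mul_const (p.1 ^ (-2 - (j : ℤ)))).mul_const (p.2.1 ^ (-(k : ℤ)))
    refine HasDerivAt.congr_deriv this ?_
    simp only [dA, dB, dθ]
    unfold W gτ
    rw [zpow_sub_one₀ hτ (-(i : ℤ) - 1)]
    push_cast
    ring
  · have hτ : π / 2 - p.2.2 ≠ 0 := (τ_pos hp).ne'
    simp only [dθ, W, gτ]
    rw [show (-((i + 1 : ℕ) : ℤ) - 1) = (-(i : ℤ) - 1) - 1 by push_cast; ring,
      zpow_sub_one₀ hτ (-(i : ℤ) - 1)]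
    ring

lemma rep_zero : Rep (fun p => phiS p.1 p.2.1 p.2.2) 0 0 0 := by
  refine ⟨fun p => -(1 / 2) * gΦ p, (Good.const _).mul Good.Φ, fun p hp => ?_⟩
  beta_reduce
  rw [phi_eq hp]
  congr 1
  have hA := (A_pos hp).ne'
  unfold gμ W gτ
  simp [zpow_neg]

lemma rep_B (k : ℕ) :
    Rep (fun p => iteratedDeriv k (fun b => phiS p.1 b p.2.2) p.2.1) 0 0 k := by
  induction k with
  | zero => simpa using rep_zero
  | succ k ih =>
    simp only [iteratedDeriv_succ]
    exact ih.stepB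

lemma rep_A (j k : ℕ) :
    Rep (fun p => iteratedDeriv j
      (fun a => iteratedDeriv k (fun b => phiS a b p.2.2) p.2.1) p.1) 0 j k := by
  induction j with
  | zero => simpa using rep_B k
  | succ j ih =>
    simp only [iteratedDeriv_succ (n := j)]
    exact ih.stepA

lemma rep_θ (i j k : ℕ) :
    Rep (fun p => iteratedDeriv i (fun θ' => iteratedDeriv j
      (fun a => iteratedDeriv k (fun b => phiS a b θ') p.2.1) p.1) p.2.2) i j k := by
  induction i with
  | zero => simpa using rep_A j k
  | succ i ih =>
    simp only [iteratedDeriv_succ (n := i)]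
    exact ih.stepθ

end PhiAux

theorem phi_partial_derivative_bounds (i j k : ℕ) (hijk : 1 ≤ i + j + k) :
    ∃ C : ℝ, 0 < C ∧ ∃ ε : ℝ, 0 < ε ∧ ε < 1 ∧
      ∀ lA lB θ : ℝ, 1 < lA → 1 < lB → 0 < θ → θ < π / 2 →
        (π / 2 - θ)⁻¹ ≤ ε * lA ^ 2 →
        |iteratedDeriv i
            (fun θ' => iteratedDeriv j
              (fun a => iteratedDeriv k (fun b => phiS a b θ') lB) lA) θ| ≤
          C * (π / 2 - θ) ^ (-(i : ℤ) - 1) * lA ^ (-2 - (j : ℤ)) * lB ^ (-(k : ℤ)) := by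
  obtain ⟨g, gg, hg⟩ := PhiAux.rep_θ i j k
  obtain ⟨C, hC⟩ := gg.bdd
  refine ⟨|C| + 1, by positivity, 1 / 5, by norm_num, by norm_num, ?_⟩
  intro lA lB θ hA hB h0 h1 hε
  have hτ : 0 < π / 2 - θ := by linarith
  have hU : ((lA, lB, θ) : PhiAux.P) ∈ PhiAux.U := by
    refine ⟨hA, hB, h0, h1, ?_⟩
    rw [inv_le_iff_one_le_mul₀ hτ] at hε
    have : 0 < lA ^ 2 * (π / 2 - θ) := by positivity
    simp only
    nlinarith
  have h := hg _ hU
  simp only at h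
  rw [h, abs_mul]
  have hA' : 0 < lA := by linarith
  have hB' : 0 < lB := by linarith
  have hW : 0 < PhiAux.W i j k (lA, lB, θ) := by
    unfold PhiAux.W; simp only; positivity
  rw [abs_of_pos hW]
  have : |g (lA, lB, θ)| ≤ |C| + 1 := (hC _ hU).trans (by linarith [le_abs_self C])
  calc _ ≤ PhiAux.W i j k (lA, lB, θ) * (|C| + 1) := mul_le_mul_of_nonneg_left this hW.le
    _ = _ := by unfold PhiAux.W; simp only; ring
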